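/- Let a : ℕ → Ω be a k-automatic sequence produced by an idempotent k-automaton 𝒜 = (S, Σ_k, δ, s₀, Ω, τ) which ignores the leading 0's and in which every state is accessible, and let x ∈ Ω. Then the constant infinite word x^ω belongs to the subshift X_a generated by a if and only if there exists a strongly connected component C of 𝒜 such that τ(s) = x for all s ∈ C. -/

import Mathlib

open Filter

/-- The upper density of a set of natural numbers:
`limsup_{n → ∞} |A ∩ [0,n)| / n`. -/
noncomputable def upperDensity (A : Set ℕ) : ℝ :=
  limsup (fun n : ℕ => (Nat.card ↥(A ∩ Set.Iio n) : ℝ) / n) atTop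

/-- The base-`k` representation of `n` as a word over `Σ_k = Fin k`, read starting
from the leading digit, with no leading zeros (junk value `[]` if `k ≤ 1`;
the representation of `0` is the empty word). -/
def kRepr (k n : ℕ) : List (Fin k) :=
  if h : 1 < k then
    (Nat.digits k n).reverse.pmap (fun d hd => (⟨d, hd⟩ : Fin k))
      (fun d hd => Nat.digits_lt_base h (List.mem_reverse.mp hd))
  else []

/-- Run a deterministic automaton with transition function `δ` from the state `s`
on the word `w`, reading `w` from the left: the extended transition function `δ*`. -/
def run {S : Type*} {k : ℕ} (δ : S → Fin k → S) (s : S) (w : List (Fin k)) : S :=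
  w.foldl δ s

/-- A sequence `a : ℕ → Ω` is `k`-automatic if it is produced by a deterministic
finite automaton with output, reading the base-`k` representation of the input
starting from the leading digit. -/
def IsAutomatic {Ω : Type*} (k : ℕ) (a : ℕ → Ω) : Prop :=
  ∃ (S : Type) (_ : Fintype S) (δ : S → Fin k → S) (s₀ : S) (τ : S → Ω),
    ∀ n : ℕ, a n = τ (run δ s₀ (kRepr k n))

/-- Two integers are multiplicatively independent if no nontrivial powers of them
coincide (equivalently, they are not both powers of a common integer). -/
def MultIndep (k l : ℕ) : Prop :=
  ∀ i j : ℕ, k ^ i = l ^ j → i = 0 ∧ j = 0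

/-- The finite word `w` occurs in the sequence `a` at position `i`. -/
def OccursAt {Ω : Type*} (a : ℕ → Ω) (w : List Ω) (i : ℕ) : Prop :=
  ∀ (j : ℕ) (h : j < w.length), w.get ⟨j, h⟩ = a (i + j)

/-- The finite word `w` is a factor of the sequence `a`. -/
def IsFactor {Ω : Type*} (a : ℕ → Ω) (w : List Ω) : Prop :=
  ∃ i : ℕ, OccursAt a w i

/-- A sequence is uniformly recurrent if each of its factors occurs in it with
bounded gaps. -/
def UniformlyRecurrent {Ω : Type*} (a : ℕ → Ω) : Prop :=
  ∀ w : List Ω, IsFactor a w →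
    ∃ C : ℕ, ∀ N : ℕ, ∃ i : ℕ, N ≤ i ∧ i ≤ N + C ∧ OccursAt a w i

/-- A strongly connected component of an automaton: a nonempty set of states closed
under all transitions and such that each of its states can be reached from each
other one by some word. -/
def IsSCC {S : Type*} {k : ℕ} (δ : S → Fin k → S) (C : Set S) : Prop :=
  C.Nonempty ∧ (∀ s ∈ C, ∀ u : Fin k, δ s u ∈ C) ∧
    ∀ s ∈ C, ∀ s' ∈ C, ∃ w : List (Fin k), run δ s w = s'

theorem kRepr_mul_add {k : ℕ} (hk : 1 < k) (q : ℕ) (d : Fin k) (h : (d : ℕ) ≠ 0 ∨ q ≠ 0) :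
    kRepr k (k * q + d) = kRepr k q ++ [d] := by
  have hdig : Nat.digits k (k * q + d) = (d : ℕ) :: Nat.digits k q := by
    rw [add_comm]
    exact Nat.digits_add k hk d q d.isLt h
  simp [kRepr, hk, hdig, List.pmap_append]

theorem kRepr_zero (k : ℕ) : kRepr k 0 = [] := by
  simp [kRepr]

theorem run_kRepr_mul_add {S : Type*} {k : ℕ} (hk : 1 < k) {δ : S → Fin k → S} {s₀ : S}
    {z₀ : Fin k} (hz₀ : (z₀ : ℕ) = 0) (hzero : δ s₀ z₀ = s₀) (q : ℕ) (d : Fin k) :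
    run δ s₀ (kRepr k (k * q + d)) = δ (run δ s₀ (kRepr k q)) d := by
  by_cases h : (d : ℕ) ≠ 0 ∨ q ≠ 0
  · simp [kRepr_mul_add hk q d h, run]
  · push Not at h
    obtain ⟨hd, rfl⟩ := h
    obtain rfl : d = z₀ := Fin.ext (hd.trans hz₀.symm)
    simp [hd, kRepr_zero, run, hzero]

/-- The number whose base-`k` representation is that of `q` followed by the digits `v`. -/
def appendDigits {k : ℕ} (q : ℕ) (v : List (Fin k)) : ℕ :=
  v.foldl (fun n d => k * n + d) q

theorem run_kRepr_appendDigits {S : Type*} {k : ℕ} (hk : 1 < k) {δ : S → Fin k → S} {s₀ : S}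
    {z₀ : Fin k} (hz₀ : (z₀ : ℕ) = 0) (hzero : δ s₀ z₀ = s₀) (v : List (Fin k)) (q : ℕ) :
    run δ s₀ (kRepr k (appendDigits q v)) = run δ (run δ s₀ (kRepr k q)) v := by
  induction v generalizing q with
  | nil => rfl
  | cons d v ih =>
    have h := ih (k * q + d)
    rw [run_kRepr_mul_add hk hz₀ hzero] at h
    exact h

theorem appendDigits_bounds {k : ℕ} (v : List (Fin k)) (q : ℕ) :
    q * k ^ v.length ≤ appendDigits q v ∧ appendDigits q v < (q + 1) * k ^ v.length := by
  induction v generalizing q with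
  | nil => simp [appendDigits]
  | cons d v ih =>
    obtain ⟨h₁, h₂⟩ := ih (k * q + d)
    change q * k ^ (v.length + 1) ≤ appendDigits (k * q + d) v ∧
      appendDigits (k * q + d) v < (q + 1) * k ^ (v.length + 1)
    constructor
    · calc q * k ^ (v.length + 1) = k * q * k ^ v.length := by ring
        _ ≤ (k * q + d) * k ^ v.length := by gcongr; omega
        _ ≤ _ := h₁
    · calc appendDigits (k * q + d) v < (k * q + d + 1) * k ^ v.length := h₂
        _ ≤ (k * q + k) * k ^ v.length := Nat.mul_le_mul_right _ (by omega)
        _ = _ := by ring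

/-- A set of states closed under all transitions contains, with the state reached on `q`, the
states reached on all numbers obtained from `q` by appending `m` digits. -/
theorem run_kRepr_mem_of_closed {S : Type*} {k : ℕ} (hk : 1 < k) {δ : S → Fin k → S} {s₀ : S}
    {z₀ : Fin k} (hz₀ : (z₀ : ℕ) = 0) (hzero : δ s₀ z₀ = s₀) {C : Set S}
    (hC : ∀ s ∈ C, ∀ u, δ s u ∈ C) {q : ℕ} (hq : run δ s₀ (kRepr k q) ∈ C) (m : ℕ) {j : ℕ}
    (hj : j < k ^ m) : run δ s₀ (kRepr k (q * k ^ m + j)) ∈ C := by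
  induction m generalizing j with
  | zero =>
    obtain rfl : j = 0 := by simpa using hj
    simpa using hq
  | succ m ih =>
    have hdiv : j / k < k ^ m := Nat.div_lt_of_lt_mul (by rwa [pow_succ'] at hj)
    have heq : q * k ^ (m + 1) + j = k * (q * k ^ m + j / k) + j % k := by
      conv_lhs => rw [← Nat.div_add_mod j k]
      ring
    rw [heq]
    have h := hC _ (ih hdiv) ⟨j % k, Nat.mod_lt _ (by omega)⟩
    rwa [← run_kRepr_mul_add hk hz₀ hzero] at h

theorem run_append {S : Type*} {k : ℕ} (δ : S → Fin k → S) (s : S) (v w : List (Fin k)) :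
    run δ s (v ++ w) = run δ (run δ s v) w :=
  List.foldl_append

theorem run_replicate_succ_of_idem {S : Type*} {k : ℕ} {δ : S → Fin k → S} {z : Fin k}
    (hidem : ∀ s, δ (δ s z) z = δ s z) (s : S) (r : ℕ) :
    run δ s (List.replicate (r + 1) z) = δ s z := by
  induction r with
  | zero => rfl
  | succ r ih => rw [List.replicate_succ', run_append, ih]; exact hidem s

/-- In a finite automaton, a strongly connected component is reachable from every state. -/
theorem exists_isSCC_subset_reachable {S : Type*} [Finite S] {k : ℕ} (δ : S → Fin k → S)
    (s : S) : ∃ C, IsSCC δ C ∧ C ⊆ Set.range (run δ s) := by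
  have hsub : ∀ {t u : S}, u ∈ Set.range (run δ t) →
      Set.range (run δ u) ⊆ Set.range (run δ t) := by
    rintro t _ ⟨v, rfl⟩ _ ⟨w, rfl⟩
    exact ⟨v ++ w, run_append δ t v w⟩
  obtain ⟨t, ht, hmin⟩ := Set.exists_min_image (Set.range (run δ s))
    (fun t => (Set.range (run δ t)).ncard) (Set.toFinite _) ⟨s, [], rfl⟩
  refine ⟨Set.range (run δ t), ⟨⟨t, [], rfl⟩, ?_, ?_⟩, hsub ht⟩
  · rintro u hu d
    exact hsub hu ⟨[d], rfl⟩
  · intro u hu u' hu'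
    rw [← Set.eq_of_subset_of_ncard_le (hsub hu) (hmin u (hsub ht hu))] at hu'
    exact hu'

theorem occursAt_replicate_iff {Ω : Type*} {a : ℕ → Ω} {n i : ℕ} {x : Ω} :
    OccursAt a (List.replicate n x) i ↔ ∀ j < n, a (i + j) = x := by
  simp [OccursAt, eq_comm]

/-- For a sequence `a` produced by an idempotent `k`-automaton which ignores the
leading `0`'s and all of whose states are accessible, the constant word `x^ω`
belongs to the subshift `X_a` generated by `a` (i.e., every constant word
`x^n` is a factor of `a`) if and only if the automaton has a strongly connected
component on which the output map is constantly equal to `x`. -/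
theorem const_word_mem_subshift_iff {S Ω : Type} [Fintype S]
    (k : ℕ) (hk : 2 ≤ k)
    (δ : S → Fin k → S) (s₀ : S) (τ : S → Ω)
    (z₀ : Fin k) (hz₀ : (z₀ : ℕ) = 0)
    (hzero : δ s₀ z₀ = s₀)
    (hidem : ∀ s : S, δ (δ s z₀) z₀ = δ s z₀)
    (hacc : ∀ s : S, ∃ w : List (Fin k), run δ s₀ w = s)
    (a : ℕ → Ω) (ha : ∀ n : ℕ, a n = τ (run δ s₀ (kRepr k n)))
    (x : Ω) :
    (∀ n : ℕ, IsFactor a (List.replicate n x)) ↔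
      ∃ C : Set S, IsSCC δ C ∧ ∀ s ∈ C, τ s = x := by
  have hk1 : 1 < k := hk
  simp only [IsFactor, occursAt_replicate_iff]
  constructor
  · intro h
    have hblock : ∀ m, ∃ s, ∀ v : List (Fin k), v.length = m → τ (run δ s v) = x := by
      intro m
      obtain ⟨i, hi⟩ := h (2 * k ^ m)
      have hpos : 0 < k ^ m := Nat.pow_pos (by omega)
      refine ⟨run δ s₀ (kRepr k (i / k ^ m + 1)), fun v hv => ?_⟩
      obtain ⟨h₁, h₂⟩ := appendDigits_bounds v (i / k ^ m + 1)
      rw [hv] at h₁ h₂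
      have hle := Nat.div_mul_le_self i (k ^ m)
      have hlt := Nat.lt_div_mul_add (a := i) hpos
      simp only [add_mul, one_mul] at h₁ h₂
      have hx := hi (appendDigits (i / k ^ m + 1) v - i) (by omega)
      rw [Nat.add_sub_cancel' (by omega), ha, run_kRepr_appendDigits hk1 hz₀ hzero] at hx
      exact hx
    obtain ⟨s, hs⟩ : ∃ s, ∀ v, τ (run δ s v) = x := by
      by_contra! hne
      choose v hv using hne
      obtain ⟨M, hM⟩ := (Set.finite_range fun s => (v s).length).bddAbove
      obtain ⟨s, hs⟩ := hblock (M + 1)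
      have hlen : (v (δ s z₀)).length ≤ M := hM ⟨_, rfl⟩
      apply hv (δ s z₀)
      have hx := hs (List.replicate (M - (v (δ s z₀)).length + 1) z₀ ++ v (δ s z₀))
        (by simp; omega)
      rwa [run_append, run_replicate_succ_of_idem hidem] at hx
    obtain ⟨C, hC, hsub⟩ := exists_isSCC_subset_reachable δ s
    refine ⟨C, hC, fun t ht => ?_⟩
    obtain ⟨v, rfl⟩ := hsub ht
    exact hs v
  · rintro ⟨C, ⟨⟨s, hs⟩, hclosed, -⟩, hx⟩ n
    obtain ⟨w, rfl⟩ := hacc s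
    have hq : run δ s₀ (kRepr k (appendDigits 0 w)) ∈ C := by
      rw [run_kRepr_appendDigits hk1 hz₀ hzero, kRepr_zero]
      exact hs
    refine ⟨appendDigits 0 w * k ^ n, fun j hj => ?_⟩
    rw [ha]
    exact hx _ (run_kRepr_mem_of_closed hk1 hz₀ hzero hclosed hq n
      (hj.trans (Nat.lt_pow_self hk1)))
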